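/- arXiv:1012.1797 — 2 statements merged into one kernel-verified Lean document; each statement's English description precedes it below -/
import Mathlib

section
/- Let k ≥ 1, n ≥ 1 and N ≥ n be integers. For every γ ∈ J_k^{reg}(1,n), the set S_γ = {Ψ ∈ J_k(n,N) : Ψ ∘ γ = 0} is a linear subspace of J_k(n,N) of codimension kN. -/
open scoped BigOperators

namespace JetPaper

/-- Monomials in `u` variables of degree between `1` and `k`:
these index a basis of `⊕_{j=1}^k Sym^j ℂ^u`. -/
def Mon (u k : ℕ) : Type := {m : Fin u → ℕ // 0 < ∑ i, m i ∧ ∑ i, m i ≤ k}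

noncomputable instance (u k : ℕ) : Fintype (Mon u k) :=
  Fintype.ofInjective
    (fun m : Mon u k => (fun i => (⟨m.1 i, Nat.lt_succ_of_le
        ((Finset.single_le_sum (fun _ _ => Nat.zero_le _) (Finset.mem_univ i)).trans
          m.2.2)⟩ : Fin (k + 1))))
    (fun m m' h => Subtype.ext (funext fun i => congrArg Fin.val (congrFun h i)))

/-- The space `J_k(u,v)` of `k`-jets at the origin of holomorphic maps `(ℂ^u,0) → (ℂ^v,0)`,
described by the coefficients (indexed by monomials of degree `1,…,k` in `u` variables)
of the `v` coordinate polynomials. -/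
abbrev Jet (k u v : ℕ) : Type := Fin v → Mon u k → ℂ

/-- The tuple of coordinate polynomials of a jet. -/
noncomputable def toPoly {k u v : ℕ} (γ : Jet k u v) : Fin v → MvPolynomial (Fin u) ℂ :=
  fun i => ∑ m : Mon u k, MvPolynomial.monomial (Finsupp.equivFunOnFinite.symm m.1) (γ i m)

/-- Composition of jets `Ψ ∘ γ`: substitution of the coordinate polynomials of `γ` into
those of `Ψ`, followed by deletion of all terms of degree greater than `k`
(only the coefficients of monomials of degree `1,…,k` are recorded). -/
noncomputable def jetComp {k u v w : ℕ} (Ψ : Jet k v w) (γ : Jet k u v) : Jet k u w :=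
  fun i m => MvPolynomial.coeff (Finsupp.equivFunOnFinite.symm m.1)
    (MvPolynomial.aeval (toPoly γ) (toPoly Ψ i))

/-- The linear part of a jet, as a matrix. -/
noncomputable def linPart {k u v : ℕ} (γ : Jet k u v) : Matrix (Fin v) (Fin u) ℂ :=
  fun i j => MvPolynomial.coeff (Finsupp.single j 1) (toPoly γ i)

/-! The map `Ψ ↦ Ψ ∘ γ` is linear, and on each of the `N` coordinates it acts by the matrix whose
columns are the truncated products `γ₁^{m₁} ⋯ γₙ^{mₙ}`. If `γᵢ'(0) = c ≠ 0`, then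
`γᵢ^b = c^b t^b + (higher order)`, so the columns of `γᵢ, γᵢ², …, γᵢ^k` form a lower triangular
matrix with diagonal `c, c², …, c^k`. Hence `Ψ ↦ Ψ ∘ γ` maps onto `J_k(1,N)`, which has dimension
`kN`, and `S_γ` is its kernel. -/

section CoeffPow

variable {σ R : Type*} [CommSemiring R] {p : MvPolynomial σ R}

lemma coeff_pow_eq_zero_of_degree_lt (hp : MvPolynomial.constantCoeff p = 0) {d : σ →₀ ℕ} {b : ℕ}
    (hd : d.degree < b) : MvPolynomial.coeff d (p ^ b) = 0 := by
  rw [← MvPolynomial.coeff_coe, MvPolynomial.coe_pow]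
  have hp' : MvPowerSeries.constantCoeff (p : MvPowerSeries σ R) = 0 := by
    rwa [← MvPowerSeries.coeff_zero_eq_constantCoeff_apply, MvPolynomial.coeff_coe]
  refine MvPowerSeries.coeff_of_lt_order (lt_of_lt_of_le ?_
    (MvPowerSeries.le_order_pow_of_constantCoeff_eq_zero b hp'))
  exact_mod_cast hd

lemma coeff_single_pow_self (hp : MvPolynomial.constantCoeff p = 0) (s : σ) (b : ℕ) :
    MvPolynomial.coeff (Finsupp.single s b) (p ^ b) =
      MvPolynomial.coeff (Finsupp.single s 1) p ^ b := by
  classical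
  induction b with
  | zero => simp
  | succ b ih =>
    rw [pow_succ, pow_succ, ← ih, MvPolynomial.coeff_mul, Finsupp.antidiagonal_single,
      Finset.sum_map, Finset.sum_eq_single_of_mem (b, 1) (by simp)]
    · rfl
    rintro ⟨i, j⟩ hij hne
    rw [Finset.HasAntidiagonal.mem_antidiagonal] at hij
    obtain rfl | hj := Nat.eq_zero_or_pos j
    · exact mul_eq_zero_of_right _ (by simpa [MvPolynomial.constantCoeff_eq] using hp)
    · have hi : i < b := by grind
      have hpow := coeff_pow_eq_zero_of_degree_lt hp (d := Finsupp.single s i) (b := b) (by simpa)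
      exact mul_eq_zero_of_left hpow _

end CoeffPow

lemma mulVec_surjective_of_submatrix {R m n m' n' : Type*} [NonUnitalNonAssocSemiring R]
    [Fintype n] [Fintype n'] {A : Matrix m n R} {e : m' → m} {f : n' → n}
    (he : Function.Surjective e) (h : Function.Surjective (A.submatrix e f).mulVec) :
    Function.Surjective A.mulVec := by
  classical
  intro y
  obtain ⟨x, hx⟩ := h (y ∘ e)
  refine ⟨∑ j, Pi.single (f j) (x j), funext fun i => ?_⟩
  obtain ⟨a, rfl⟩ := he i
  simp only [Matrix.mulVec_sum, Matrix.mulVec_single, Finset.sum_apply]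
  exact congrFun hx a

namespace Mon

variable {u k : ℕ}

/-- The pure power `xᵢ^(j+1)`, for `0 ≤ j < k`. -/
def purePow (i : Fin u) (j : Fin k) : Mon u k :=
  ⟨Pi.single i (j + 1), by simp, by simp⟩

lemma equivFunOnFinite_symm_purePow (i : Fin u) (j : Fin k) :
    Finsupp.equivFunOnFinite.symm (purePow i j).1 = Finsupp.single i (j + 1 : ℕ) :=
  Finsupp.equivFunOnFinite_symm_single i _

lemma purePow_bijective : Function.Bijective (purePow (0 : Fin 1) : Fin k → Mon 1 k) := by
  constructor
  · intro a b hab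
    have h : (a : ℕ) + 1 = b + 1 := by simpa [purePow] using congrFun (congrArg Subtype.val hab) 0
    exact Fin.ext (Nat.succ_injective h)
  · rintro ⟨m, hpos, hle⟩
    rw [Fin.sum_univ_one] at hpos hle
    refine ⟨⟨m 0 - 1, by omega⟩, Subtype.ext (funext fun i => ?_)⟩
    rw [Subsingleton.elim i 0]
    simp [purePow, Nat.sub_add_cancel hpos]

lemma card_one : Fintype.card (Mon 1 k) = k := by
  simpa using (Fintype.card_of_bijective (purePow_bijective (k := k))).symm

end Mon

lemma finrank_jet_one (k w : ℕ) : Module.finrank ℂ (Jet k 1 w) = k * w := by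
  simp [Module.finrank_pi_fintype, Mon.card_one, mul_comm]

section Composition

variable {k u v : ℕ}

lemma constantCoeff_toPoly (γ : Jet k u v) (i : Fin v) :
    MvPolynomial.constantCoeff (toPoly γ i) = 0 := by
  classical
  rw [toPoly, map_sum]
  refine Finset.sum_eq_zero fun m _ => ?_
  rw [MvPolynomial.constantCoeff_monomial, if_neg]
  intro hm
  have hm' : m.1 = 0 := funext (DFunLike.congr_fun hm)
  simpa [hm'] using m.2.1

/-- The matrix of `ψ ↦ ψ ∘ γ` on scalar-valued jets: the column of the monomial `m'` lists the
coefficients of `∏ s, γ s ^ m' s`. -/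
noncomputable def compMatrix (γ : Jet k u v) : Matrix (Mon u k) (Mon v k) ℂ :=
  fun m m' => MvPolynomial.coeff (Finsupp.equivFunOnFinite.symm m.1) (∏ s, toPoly γ s ^ m'.1 s)

lemma jetComp_apply {w : ℕ} (Ψ : Jet k v w) (γ : Jet k u v) (i : Fin w) :
    jetComp Ψ γ i = (compMatrix γ).mulVec (Ψ i) := by
  funext m
  rw [jetComp, toPoly, map_sum, MvPolynomial.coeff_sum]
  refine Finset.sum_congr rfl fun m' _ => ?_
  rw [MvPolynomial.aeval_monomial, Finsupp.prod_fintype _ _ fun _ => pow_zero _,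
    MvPolynomial.algebraMap_eq, MvPolynomial.coeff_C_mul, mul_comm]
  rfl

lemma compMatrix_purePow (γ : Jet k u v) (s : Fin u) (i : Fin v) (a b : Fin k) :
    compMatrix γ (Mon.purePow s a) (Mon.purePow i b) =
      MvPolynomial.coeff (Finsupp.single s (a + 1 : ℕ)) (toPoly γ i ^ (b + 1 : ℕ)) := by
  rw [compMatrix, Mon.equivFunOnFinite_symm_purePow, Finset.prod_eq_single i]
  · simp [Mon.purePow]
  · intro r _ hr
    simp [Mon.purePow, hr]
  · simp

lemma det_compMatrix_submatrix_purePow (γ : Jet k u v) (s : Fin u) (i : Fin v) :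
    ((compMatrix γ).submatrix (Mon.purePow s) (Mon.purePow i)).det =
      ∏ b : Fin k, linPart γ i s ^ (b + 1 : ℕ) := by
  have hγ := constantCoeff_toPoly γ i
  rw [Matrix.det_of_isLowerTriangular]
  · refine Finset.prod_congr rfl fun b _ => ?_
    rw [Matrix.submatrix_apply, compMatrix_purePow, coeff_single_pow_self hγ, linPart]
  · intro a b hab
    have hlt : a < b := hab
    rw [Matrix.submatrix_apply, compMatrix_purePow]
    exact coeff_pow_eq_zero_of_degree_lt hγ (by simpa using hlt)

lemma compMatrix_mulVec_surjective {γ : Jet k 1 v} (hγ : linPart γ ≠ 0) :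
    Function.Surjective (compMatrix γ).mulVec := by
  obtain ⟨i, hi⟩ : ∃ i, linPart γ i 0 ≠ 0 := by
    contrapose! hγ
    ext i j
    rw [Subsingleton.elim j 0, hγ, Matrix.zero_apply]
  refine mulVec_surjective_of_submatrix (f := Mon.purePow i)
    Mon.purePow_bijective.surjective ?_
  rw [Matrix.mulVec_surjective_iff_isUnit, Matrix.isUnit_iff_isUnit_det, isUnit_iff_ne_zero]
  refine (det_compMatrix_submatrix_purePow γ 0 i).trans_ne ?_
  exact Finset.prod_ne_zero_iff.2 fun b _ => pow_ne_zero _ hi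

/-- Composition with a fixed jet `γ`, the linear map `Ψ ↦ Ψ ∘ γ`. -/
noncomputable def jetCompLinearMap (w : ℕ) (γ : Jet k u v) : Jet k v w →ₗ[ℂ] Jet k u w :=
  LinearMap.pi fun i => (compMatrix γ).mulVecLin ∘ₗ LinearMap.proj i

lemma jetCompLinearMap_apply {w : ℕ} (γ : Jet k u v) (Ψ : Jet k v w) :
    jetCompLinearMap w γ Ψ = jetComp Ψ γ :=
  funext fun i => (jetComp_apply Ψ γ i).symm

lemma jetCompLinearMap_surjective (w : ℕ) {γ : Jet k 1 v} (hγ : linPart γ ≠ 0) :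
    Function.Surjective (jetCompLinearMap w γ) := fun Φ => by
  choose Ψ hΨ using fun i => compMatrix_mulVec_surjective hγ (Φ i)
  exact ⟨Ψ, funext hΨ⟩

end Composition

theorem codim_solution_space_general (k n N : ℕ) (γ : Jet k 1 n) (hγ : linPart γ ≠ 0) :
    ∃ S : Submodule ℂ (Jet k n N),
      (S : Set (Jet k n N)) = {Ψ : Jet k n N | jetComp Ψ γ = 0} ∧
      Module.finrank ℂ (Jet k n N ⧸ S) = k * N := by
  refine ⟨LinearMap.ker (jetCompLinearMap N γ), ?_, ?_⟩
  · ext Ψ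
    simp [jetCompLinearMap_apply]
  · have hsurj := jetCompLinearMap_surjective N hγ
    rw [((jetCompLinearMap N γ).quotKerEquivOfSurjective hsurj).finrank_eq, finrank_jet_one]

/-- For `γ ∈ J_k^{reg}(1,n)`, the set
`S_γ = {Ψ ∈ J_k(n,N) : Ψ ∘ γ = 0}` is a linear subspace of `J_k(n,N)` of codimension `kN`. -/
theorem codim_solution_space (k n N : ℕ) (hk : 1 ≤ k) (hn : 1 ≤ n) (hN : n ≤ N)
    (γ : Jet k 1 n) (hγ : linPart γ ≠ 0) :
    ∃ S : Submodule ℂ (Jet k n N),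
      (S : Set (Jet k n N)) = {Ψ : Jet k n N | jetComp Ψ γ = 0} ∧
      Module.finrank ℂ (Jet k n N ⧸ S) = k * N :=
  codim_solution_space_general k n N γ hγ

end JetPaper
end

section
/- Let k ≥ 1, n ≥ 1 and N ≥ n be integers. For any γ ∈ J_k^{reg}(1,n), the subset S_γ ∩ J_k^o(n,N) is dense in S_γ = {Ψ ∈ J_k(n,N) : Ψ ∘ γ = 0} (with respect to the standard topology of the finite-dimensional vector space J_k(n,N)). -/
open scoped BigOperators

namespace JetPaper

/-- The dimension of the kernel of the linear part of a jet. -/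
noncomputable def kerDim {k n N : ℕ} (Ψ : Jet k n N) : ℕ :=
  Module.finrank ℂ (LinearMap.ker (Matrix.mulVecLin (linPart Ψ)))

/-! Write `𝔪` for the ideal of the variables. Every matrix `A` with `A γ' = 0` is the linear part of
a jet in `S_γ`: choose a left inverse `L` of `γ'`. The substitution `L ∘ γ` is the identity
modulo `𝔪²`, hence surjective on `𝔪²` modulo `𝔪^(k+1)`, so `A ∘ γ ∈ 𝔪²` can be cancelled by a
polynomial in `L x` without terms of degree less than `2`. Now take `Φ ∈ S_γ` with
`ker Φ' = im γ'`. For `Ψ ∈ S_γ` the line `Ψ + t Φ` stays in `S_γ`, and passing to the quotient by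
`im γ'` shows that `ker (Ψ' + t Φ') = im γ'` for all but finitely many `t`. -/

section LinearAlgebra

open LinearMap Module

variable {K V W : Type*} [Field K] [AddCommGroup V] [Module K V] [AddCommGroup W] [Module K W]

lemma exists_ker_eq_of_finrank_quotient_le [FiniteDimensional K V] [FiniteDimensional K W]
    (U : Submodule K V) (hU : finrank K (V ⧸ U) ≤ finrank K W) : ∃ f : V →ₗ[K] W, ker f = U := by
  obtain ⟨g, hg⟩ := finrank_le_iff_exists_linearMap.1 hU
  exact ⟨g ∘ₗ U.mkQ, by rw [ker_comp, ker_eq_bot.2 hg, Submodule.comap_bot, Submodule.ker_mkQ]⟩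

lemma finite_setOf_ker_add_smul_ne_bot [FiniteDimensional K V] (f g : V →ₗ[K] W) (hg : ker g = ⊥) :
    {t : K | ker (f + t • g) ≠ ⊥}.Finite := by
  obtain ⟨l, hl⟩ := g.exists_leftInverse_of_injective hg
  refine ((End.finite_spectrum (l ∘ₗ f)).preimage neg_injective.injOn).subset fun t ht ↦ ?_
  obtain ⟨x, hx, hx0⟩ := Submodule.exists_mem_ne_zero_of_ne_bot ht
  refine (End.hasEigenvalue_of_hasEigenvector (x := x)
    ⟨End.mem_eigenspace_iff.2 ?_, hx0⟩).mem_spectrum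
  have hlx : l (g x) = x := LinearMap.congr_fun hl x
  have hfx : f x = -(t • g x) := eq_neg_of_add_eq_zero_left hx
  rw [comp_apply, hfx, map_neg, map_smul, hlx, neg_smul]

lemma finite_setOf_ker_add_smul_ne [FiniteDimensional K V] (f g : V →ₗ[K] W) (h : ker g ≤ ker f) :
    {t : K | ker (f + t • g) ≠ ker g}.Finite := by
  let f' := (ker g).liftQ f h
  let g' := (ker g).liftQ g le_rfl
  have hg' : ker g' = ⊥ := Submodule.ker_liftQ_eq_bot' _ _ rfl
  refine (finite_setOf_ker_add_smul_ne_bot f' g' hg').subset fun t ht ht' ↦ ht ?_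
  have hcomp : f + t • g = (f' + t • g') ∘ₗ (ker g).mkQ := by
    rw [add_comp, smul_comp, Submodule.liftQ_mkQ, Submodule.liftQ_mkQ]
  rw [hcomp, ker_comp, ht', Submodule.comap_bot, Submodule.ker_mkQ]

lemma exists_mul_eq_one_of_linearIndependent_col {ι κ : Type*} [Fintype ι] [Finite κ]
    [DecidableEq κ] {M : Matrix ι κ K} (hM : LinearIndependent K M.col) :
    ∃ L : Matrix κ ι K, L * M = 1 := by
  classical
  cases nonempty_fintype κ
  obtain ⟨l, hl⟩ := M.mulVecLin.exists_leftInverse_of_injective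
    (ker_eq_bot.2 (Matrix.mulVec_injective_iff.2 hM))
  refine ⟨toMatrix' l, ?_⟩
  rw [← toMatrix'_toLin' M, ← toMatrix'_comp, Matrix.toLin'_apply', hl, toMatrix'_id]

lemma linearIndependent_col_of_ne_zero {ι κ : Type*} [Unique κ] {M : Matrix ι κ K} (hM : M ≠ 0) :
    LinearIndependent K M.col := by
  refine linearIndependent_unique_iff.2 fun h ↦ hM (Matrix.ext fun i j ↦ ?_)
  rw [Subsingleton.elim j default]
  exact congrFun h i

lemma finrank_range_mulVecLin_of_linearIndependent_col {ι κ : Type*} [Fintype κ]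
    {M : Matrix ι κ K} (hM : LinearIndependent K M.col) :
    finrank K (range M.mulVecLin) = Fintype.card κ := by
  rw [Matrix.range_mulVecLin, finrank_span_eq_card hM]

end LinearAlgebra

lemma mem_closure_of_finite_setOf_add_smul_notMem {𝕜 E : Type*} [NontriviallyNormedField 𝕜]
    [AddCommGroup E] [Module 𝕜 E] [TopologicalSpace E] [ContinuousAdd E]
    [ContinuousSMul 𝕜 E] {s : Set E} (x y : E) (h : {t : 𝕜 | x + t • y ∉ s}.Finite) :
    x ∈ closure s := by
  have hdense : (0 : 𝕜) ∈ closure {t : 𝕜 | x + t • y ∉ s}ᶜ := by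
    simpa only [Set.compl_eq_univ_sdiff] using dense_univ.sdiff_finite h 0
  have hcont : Continuous fun t : 𝕜 ↦ x + t • y := by fun_prop
  simpa using map_mem_closure hcont hdense fun t ht ↦ not_not.1 ht

section NearIdentity

variable {R : Type*} [CommRing R] {I : Ideal R} {φ : R →+* R}

lemma map_sub_self_mem_pow_succ (hφ : ∀ x ∈ I, φ x - x ∈ I ^ 2) {d : ℕ} (hd : 1 ≤ d) {x : R}
    (hx : x ∈ I ^ d) : φ x - x ∈ I ^ (d + 1) := by
  induction d, hd using Nat.le_induction generalizing x with
  | base => exact hφ x (by rwa [pow_one] at hx)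
  | succ d _ ih =>
    rw [pow_succ] at hx
    induction hx using Submodule.mul_induction_on' with
    | mem_mul_mem a ha b hb =>
      have hφa : φ a ∈ I ^ d :=
        ((I ^ d).sub_mem_iff_left ha).1 (Ideal.pow_le_pow_right d.le_succ (ih ha))
      have hleibniz : φ (a * b) - a * b = φ a * (φ b - b) + (φ a - a) * b := by
        rw [map_mul]; ring
      rw [hleibniz]
      refine add_mem ?_ ?_
      · exact pow_add I d 2 ▸ Ideal.mul_mem_mul hφa (hφ b hb)
      · exact pow_succ I (d + 1) ▸ Ideal.mul_mem_mul (ih ha) hb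
    | add a _ b _ ha hb => simpa only [map_add, add_sub_add_comm] using add_mem ha hb

/-- Newton-type iteration: replacing `q` by `q - (φ q - p)` gains one order of accuracy. -/
lemma exists_map_sub_mem_pow (hφ : ∀ x ∈ I, φ x - x ∈ I ^ 2) {p : R} (hp : p ∈ I ^ 2) (d : ℕ) :
    ∃ q ∈ I ^ 2, φ q - p ∈ I ^ (d + 2) := by
  induction d with
  | zero => exact ⟨0, zero_mem _, by simpa using hp⟩
  | succ d ih =>
    obtain ⟨q, hq, hr⟩ := ih
    refine ⟨q - (φ q - p), sub_mem hq (Ideal.pow_le_pow_right (by omega) hr), ?_⟩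
    have hstep : φ (q - (φ q - p)) - p = -(φ (φ q - p) - (φ q - p)) := by rw [map_sub]; ring
    rw [hstep]
    exact neg_mem (map_sub_self_mem_pow_succ hφ (by omega) hr)

end NearIdentity

section LinearCoefficients

open MvPolynomial

variable {ι σ τ R : Type*} [CommRing R]

/-- The matrix of linear coefficients of a family of polynomials, that is, its Jacobian matrix at
the origin. -/
noncomputable def linCoeff (P : ι → MvPolynomial σ R) : Matrix ι σ R :=
  Matrix.of fun i j ↦ coeff (Finsupp.single j 1) (P i)

lemma linCoeff_toMvPolynomial [Fintype σ] (A : Matrix ι σ R) :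
    linCoeff A.toMvPolynomial = A := by
  classical
  ext i j
  simp [linCoeff, Matrix.toMvPolynomial, coeff_sum, coeff_monomial, Finsupp.single_left_inj]

lemma toMvPolynomial_mem_idealOfVars [Fintype σ] (A : Matrix ι σ R) (i : ι) :
    A.toMvPolynomial i ∈ idealOfVars σ R :=
  sum_mem fun j _ ↦ by
    rw [← C_mul_X_eq_monomial]
    exact Ideal.mul_mem_left _ _ (Ideal.subset_span ⟨j, rfl⟩)

lemma mem_idealOfVars_iff_coeff_zero {p : MvPolynomial σ R} :
    p ∈ idealOfVars σ R ↔ coeff 0 p = 0 := by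
  rw [← pow_one (idealOfVars σ R), mem_pow_idealOfVars_iff']
  simp [Finsupp.degree_eq_zero_iff]

lemma linCoeff_eq_iff {P Q : ι → MvPolynomial σ R} (hP : ∀ i, P i ∈ idealOfVars σ R)
    (hQ : ∀ i, Q i ∈ idealOfVars σ R) :
    linCoeff P = linCoeff Q ↔ ∀ i, P i - Q i ∈ idealOfVars σ R ^ 2 := by
  simp only [mem_pow_idealOfVars_iff', coeff_sub, sub_eq_zero]
  refine ⟨fun h i s hs ↦ ?_, fun h ↦ Matrix.ext fun i j ↦ h i _ (by simp)⟩
  obtain hs0 | hs1 : s.degree = 0 ∨ s.degree = 1 := by omega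
  · rw [(Finsupp.degree_eq_zero_iff s).1 hs0, mem_idealOfVars_iff_coeff_zero.1 (hP i),
      mem_idealOfVars_iff_coeff_zero.1 (hQ i)]
  · obtain ⟨j, rfl⟩ := (Finsupp.sum_eq_one_iff s).1 hs1
    exact congrFun (congrFun h i) j

lemma aeval_mem_pow_idealOfVars {g : τ → MvPolynomial σ R} (hg : ∀ j, g j ∈ idealOfVars σ R)
    {d : ℕ} {p : MvPolynomial τ R} (hp : p ∈ idealOfVars τ R ^ d) :
    aeval g p ∈ idealOfVars σ R ^ d := by
  have hle : (idealOfVars τ R).map (aeval g) ≤ idealOfVars σ R := by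
    rw [Ideal.map_span, Ideal.span_le]
    rintro _ ⟨_, ⟨j, rfl⟩, rfl⟩
    simpa using hg j
  refine Ideal.pow_right_mono hle d ?_
  rw [← Ideal.map_pow]
  exact Ideal.mem_map_of_mem _ hp

lemma aeval_mem_idealOfVars {g : τ → MvPolynomial σ R} (hg : ∀ j, g j ∈ idealOfVars σ R)
    {p : MvPolynomial τ R} (hp : p ∈ idealOfVars τ R) : aeval g p ∈ idealOfVars σ R := by
  rw [← pow_one (idealOfVars _ R)] at hp ⊢
  exact aeval_mem_pow_idealOfVars hg hp

lemma linCoeff_aeval [Fintype τ] {g : τ → MvPolynomial σ R} (hg : ∀ j, g j ∈ idealOfVars σ R)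
    {P : ι → MvPolynomial τ R} (hP : ∀ i, P i ∈ idealOfVars τ R) :
    linCoeff (fun i ↦ aeval g (P i)) = linCoeff P * linCoeff g := by
  have hlin (i : ι) := toMvPolynomial_mem_idealOfVars (linCoeff P) i
  calc linCoeff (fun i ↦ aeval g (P i))
      = linCoeff (fun i ↦ aeval g ((linCoeff P).toMvPolynomial i)) := by
        refine (linCoeff_eq_iff (fun i ↦ aeval_mem_idealOfVars hg (hP i))
          fun i ↦ aeval_mem_idealOfVars hg (hlin i)).2 fun i ↦ ?_
        rw [← map_sub]
        exact aeval_mem_pow_idealOfVars hg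
          ((linCoeff_eq_iff hP hlin).1 (linCoeff_toMvPolynomial _).symm i)
    _ = linCoeff P * linCoeff g := by
        ext i j
        simp [linCoeff, Matrix.toMvPolynomial, Matrix.mul_apply, coeff_sum,
          ← C_mul_X_eq_monomial]

lemma aeval_sub_self_mem_sq [Finite σ] [DecidableEq σ] {g : σ → MvPolynomial σ R}
    (hg : ∀ j, g j ∈ idealOfVars σ R) (hg1 : linCoeff g = 1) {p : MvPolynomial σ R}
    (hp : p ∈ idealOfVars σ R) : aeval g p - p ∈ idealOfVars σ R ^ 2 := by
  cases nonempty_fintype σ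
  refine (linCoeff_eq_iff (ι := Unit) (P := fun _ ↦ aeval g p) (Q := fun _ ↦ p)
    (fun _ ↦ aeval_mem_idealOfVars hg hp) fun _ ↦ hp).1 ?_ ()
  rw [linCoeff_aeval hg fun _ ↦ hp, hg1, Matrix.mul_one]

lemma exists_linCoeff_eq_aeval_mem_pow [Finite σ] [Fintype τ] [DecidableEq σ]
    {g : τ → MvPolynomial σ R} (hg : ∀ j, g j ∈ idealOfVars σ R) {L : Matrix σ τ R}
    (hL : L * linCoeff g = 1) {A : Matrix ι τ R} (hA : A * linCoeff g = 0) (d : ℕ) :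
    ∃ P : ι → MvPolynomial τ R, (∀ i, P i ∈ idealOfVars τ R) ∧ linCoeff P = A ∧
      ∀ i, aeval g (P i) ∈ idealOfVars σ R ^ d := by
  have hLmem := toMvPolynomial_mem_idealOfVars L
  have hAmem := toMvPolynomial_mem_idealOfVars A
  let h : σ → MvPolynomial σ R := fun j ↦ aeval g (L.toMvPolynomial j)
  have hh (j : σ) : h j ∈ idealOfVars σ R := aeval_mem_idealOfVars hg (hLmem j)
  have hh1 : linCoeff h = 1 := by rw [linCoeff_aeval hg hLmem, linCoeff_toMvPolynomial, hL]
  have hAg (i : ι) : aeval g (A.toMvPolynomial i) ∈ idealOfVars σ R ^ 2 := by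
    have hlin : linCoeff (fun i ↦ aeval g (A.toMvPolynomial i)) = linCoeff fun _ ↦ 0 := by
      rw [linCoeff_aeval hg hAmem, linCoeff_toMvPolynomial, hA]
      rfl
    simpa using (linCoeff_eq_iff (fun i ↦ aeval_mem_idealOfVars hg (hAmem i))
      fun _ ↦ zero_mem _).1 hlin i
  choose Q hQ hQA using fun i ↦ exists_map_sub_mem_pow (φ := (aeval h).toRingHom)
    (fun _ ↦ aeval_sub_self_mem_sq hh hh1) (hAg i) d
  have hQL (i : ι) : aeval L.toMvPolynomial (Q i) ∈ idealOfVars τ R ^ 2 :=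
    aeval_mem_pow_idealOfVars hLmem (hQ i)
  have hPmem (i : ι) : A.toMvPolynomial i - aeval L.toMvPolynomial (Q i) ∈ idealOfVars τ R :=
    sub_mem (hAmem i) (Ideal.pow_le_self two_ne_zero (hQL i))
  refine ⟨fun i ↦ A.toMvPolynomial i - aeval L.toMvPolynomial (Q i), hPmem, ?_, fun i ↦ ?_⟩
  · conv_rhs => rw [← linCoeff_toMvPolynomial A]
    refine (linCoeff_eq_iff hPmem hAmem).2 fun i ↦ ?_
    simpa using hQL i
  · have hcomp : aeval g (aeval L.toMvPolynomial (Q i)) = aeval h (Q i) :=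
      comp_aeval_apply ..
    rw [map_sub, hcomp, ← neg_sub]
    exact neg_mem (Ideal.pow_le_pow_right (by omega) (hQA i))

end LinearCoefficients

section Jets

open MvPolynomial

variable {k u v w : ℕ}

/-- The `k`-jet of a polynomial map: constant terms and terms of degree greater than `k` are
deleted. -/
noncomputable def truncate (k : ℕ) (P : Fin v → MvPolynomial (Fin u) ℂ) : Jet k u v :=
  fun i m ↦ coeff (Finsupp.equivFunOnFinite.symm m.1) (P i)

lemma jetComp_eq_truncate (Ψ : Jet k v w) (γ : Jet k u v) :
    jetComp Ψ γ = truncate k fun i ↦ aeval (toPoly γ) (toPoly Ψ i) :=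
  rfl

lemma linPart_eq_linCoeff (γ : Jet k u v) : linPart γ = linCoeff (toPoly γ) :=
  rfl

lemma exists_mon_eq {s : Fin u →₀ ℕ} (hs0 : s ≠ 0) (hsk : s.degree ≤ k) :
    ∃ m : Mon u k, Finsupp.equivFunOnFinite.symm m.1 = s := by
  have hsum : ∑ i, s i = s.degree := (Finsupp.degree_eq_sum s).symm
  refine ⟨⟨s, ?_, hsum ▸ hsk⟩, Finsupp.equivFunOnFinite.symm_apply_apply s⟩
  rw [hsum]
  exact Nat.pos_of_ne_zero fun h ↦ hs0 ((Finsupp.degree_eq_zero_iff s).1 h)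

lemma degree_mon (m : Mon u k) :
    (Finsupp.equivFunOnFinite.symm m.1).degree = ∑ i, m.1 i :=
  Finsupp.degree_eq_sum _

lemma truncate_toPoly (γ : Jet k u v) : truncate k (toPoly γ) = γ := by
  classical
  funext i m
  simp only [truncate, toPoly, coeff_sum, coeff_monomial, EmbeddingLike.apply_eq_iff_eq]
  rw [Finset.sum_eq_single m (fun m' _ hm' ↦ if_neg (Subtype.val_injective.ne hm')) (by simp),
    if_pos rfl]

lemma toPoly_mem_idealOfVars (γ : Jet k u v) (i : Fin v) :
    toPoly γ i ∈ idealOfVars (Fin u) ℂ :=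
  sum_mem fun m _ ↦ Ideal.pow_le_self (Nat.pos_iff_ne_zero.1 m.2.1) <|
    (mem_pow_idealOfVars_iff _ _).2 fun s hs ↦ by
      rw [Finset.mem_singleton.1 (support_monomial_subset hs), degree_mon]

lemma truncate_eq_iff {P Q : Fin v → MvPolynomial (Fin u) ℂ}
    (hP : ∀ i, P i ∈ idealOfVars (Fin u) ℂ) (hQ : ∀ i, Q i ∈ idealOfVars (Fin u) ℂ) :
    truncate k P = truncate k Q ↔ ∀ i, P i - Q i ∈ idealOfVars (Fin u) ℂ ^ (k + 1) := by
  simp only [mem_pow_idealOfVars_iff', coeff_sub, sub_eq_zero, Nat.lt_succ_iff]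
  refine ⟨fun h i s hs ↦ ?_, fun h ↦ funext₂ fun i m ↦ h i _ ((degree_mon m).trans_le m.2.2)⟩
  by_cases hs0 : s = 0
  · rw [hs0, mem_idealOfVars_iff_coeff_zero.1 (hP i), mem_idealOfVars_iff_coeff_zero.1 (hQ i)]
  · obtain ⟨m, rfl⟩ := exists_mon_eq hs0 hs
    exact congrFun₂ h i m

lemma jetComp_eq_zero_iff {Ψ : Jet k v w} {γ : Jet k u v} :
    jetComp Ψ γ = 0 ↔ ∀ i, aeval (toPoly γ) (toPoly Ψ i) ∈ idealOfVars (Fin u) ℂ ^ (k + 1) := by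
  have hcomp (i : Fin w) : aeval (toPoly γ) (toPoly Ψ i) ∈ idealOfVars (Fin u) ℂ :=
    aeval_mem_idealOfVars (toPoly_mem_idealOfVars γ) (toPoly_mem_idealOfVars Ψ i)
  have hzero : truncate k (fun _ ↦ 0) = (0 : Jet k u w) := by
    funext i _
    simp only [truncate, coeff_zero, Pi.zero_apply]
  rw [jetComp_eq_truncate, ← hzero, truncate_eq_iff hcomp fun _ ↦ zero_mem _]
  simp only [sub_zero]

lemma toPoly_truncate_sub_mem {P : Fin v → MvPolynomial (Fin u) ℂ}
    (hP : ∀ i, P i ∈ idealOfVars (Fin u) ℂ) (i : Fin v) :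
    toPoly (truncate k P) i - P i ∈ idealOfVars (Fin u) ℂ ^ (k + 1) :=
  (truncate_eq_iff (toPoly_mem_idealOfVars _) hP).1 (truncate_toPoly _) i

lemma linPart_truncate (hk : 1 ≤ k) {P : Fin v → MvPolynomial (Fin u) ℂ}
    (hP : ∀ i, P i ∈ idealOfVars (Fin u) ℂ) : linPart (truncate k P) = linCoeff P :=
  (linCoeff_eq_iff (toPoly_mem_idealOfVars _) hP).2 fun i ↦
    Ideal.pow_le_pow_right (by omega) (toPoly_truncate_sub_mem hP i)

lemma linPart_jetComp (hk : 1 ≤ k) (Ψ : Jet k v w) (γ : Jet k u v) :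
    linPart (jetComp Ψ γ) = linPart Ψ * linPart γ := by
  have hγ := toPoly_mem_idealOfVars γ
  have hΨ := toPoly_mem_idealOfVars Ψ
  rw [jetComp_eq_truncate, linPart_truncate hk fun i ↦ aeval_mem_idealOfVars hγ (hΨ i),
    linCoeff_aeval hγ hΨ, linPart_eq_linCoeff, linPart_eq_linCoeff]

lemma toPoly_add_smul (Ψ Φ : Jet k u v) (t : ℂ) (i : Fin v) :
    toPoly (Ψ + t • Φ) i = toPoly Ψ i + t • toPoly Φ i := by
  simp [toPoly, Finset.sum_add_distrib, Finset.smul_sum, smul_monomial]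

lemma jetComp_add_smul (Ψ Φ : Jet k v w) (γ : Jet k u v) (t : ℂ) :
    jetComp (Ψ + t • Φ) γ = jetComp Ψ γ + t • jetComp Φ γ := by
  funext i _
  simp [jetComp, toPoly_add_smul]

lemma mulVecLin_linPart_add_smul (Ψ Φ : Jet k u v) (t : ℂ) :
    (linPart (Ψ + t • Φ)).mulVecLin = (linPart Ψ).mulVecLin + t • (linPart Φ).mulVecLin := by
  have hlin : linPart (Ψ + t • Φ) = linPart Ψ + t • linPart Φ := by
    ext i j
    simp [linPart, toPoly_add_smul]
  simp only [hlin, ← Matrix.toLin'_apply', map_add, map_smul]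

lemma exists_jetComp_eq_zero_linPart_eq (hk : 1 ≤ k) {γ : Jet k u v}
    (hγ : LinearIndependent ℂ (linPart γ).col) {A : Matrix (Fin w) (Fin v) ℂ}
    (hA : A * linPart γ = 0) : ∃ Φ : Jet k v w, jetComp Φ γ = 0 ∧ linPart Φ = A := by
  have hγmem := toPoly_mem_idealOfVars γ
  obtain ⟨L, hL⟩ := exists_mul_eq_one_of_linearIndependent_col hγ
  obtain ⟨P, hP, hPA, hPγ⟩ := exists_linCoeff_eq_aeval_mem_pow hγmem hL hA (k + 1)
  refine ⟨truncate k P, jetComp_eq_zero_iff.2 fun i ↦ ?_, (linPart_truncate hk hP).trans hPA⟩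
  have htrunc := aeval_mem_pow_idealOfVars hγmem (toPoly_truncate_sub_mem (k := k) hP i)
  rw [map_sub] at htrunc
  exact (Submodule.sub_mem_iff_left _ (hPγ i)).1 htrunc

lemma range_linPart_le_ker_of_jetComp_eq_zero (hk : 1 ≤ k) {Ψ : Jet k v w} {γ : Jet k u v}
    (h : jetComp Ψ γ = 0) :
    LinearMap.range (linPart γ).mulVecLin ≤ LinearMap.ker (linPart Ψ).mulVecLin := by
  have hmul : linPart Ψ * linPart γ = 0 := by
    rw [← linPart_jetComp hk, h]
    ext i j
    simp [linPart, toPoly]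
  rw [LinearMap.range_le_ker_iff, ← Matrix.mulVecLin_mul, hmul, Matrix.mulVecLin_zero]

lemma exists_jetComp_eq_zero_ker_linPart_eq (hk : 1 ≤ k) (hvw : v ≤ w + u) {γ : Jet k u v}
    (hγ : LinearIndependent ℂ (linPart γ).col) :
    ∃ Φ : Jet k v w, jetComp Φ γ = 0 ∧
      LinearMap.ker (linPart Φ).mulVecLin = LinearMap.range (linPart γ).mulVecLin := by
  let U := LinearMap.range (linPart γ).mulVecLin
  have hquot : Module.finrank ℂ ((Fin v → ℂ) ⧸ U) ≤ Module.finrank ℂ (Fin w → ℂ) := by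
    have hrank : Module.finrank ℂ U = _ := finrank_range_mulVecLin_of_linearIndependent_col hγ
    have hadd := U.finrank_quotient_add_finrank
    simp only [Module.finrank_fin_fun, Fintype.card_fin] at hadd hrank ⊢
    omega
  obtain ⟨f, hf⟩ := exists_ker_eq_of_finrank_quotient_le U hquot
  obtain ⟨A, rfl⟩ := Matrix.toLin'.surjective f
  have hA : A * linPart γ = 0 := by
    apply Matrix.toLin'.injective
    rw [Matrix.toLin'_mul, map_zero]
    exact LinearMap.range_le_ker_iff.1 hf.ge
  obtain ⟨Φ, hΦ, rfl⟩ := exists_jetComp_eq_zero_linPart_eq hk hγ hA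
  exact ⟨Φ, hΦ, hf⟩

end Jets

theorem dense_JO_in_solution_space_general {k u n N : ℕ} (hk : 1 ≤ k) (hN : n ≤ N + u)
    (γ : Jet k u n) (hγ : LinearIndependent ℂ (linPart γ).col) :
    {Ψ : Jet k n N | jetComp Ψ γ = 0} ⊆
      closure ({Ψ : Jet k n N | jetComp Ψ γ = 0} ∩ {Ψ : Jet k n N | kerDim Ψ = u}) := by
  intro Ψ (hΨ : jetComp Ψ γ = 0)
  have hrank := finrank_range_mulVecLin_of_linearIndependent_col hγ
  rw [Fintype.card_fin] at hrank
  obtain ⟨Φ, hΦ, hΦker⟩ := exists_jetComp_eq_zero_ker_linPart_eq hk hN hγ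
  have hle : LinearMap.ker (linPart Φ).mulVecLin ≤ LinearMap.ker (linPart Ψ).mulVecLin := by
    rw [hΦker]
    exact range_linPart_le_ker_of_jetComp_eq_zero hk hΨ
  refine mem_closure_of_finite_setOf_add_smul_notMem (𝕜 := ℂ) Ψ Φ
    ((finite_setOf_ker_add_smul_ne _ _ hle).subset fun t ht hker ↦ ht ⟨?_, ?_⟩)
  · rw [Set.mem_ofPred_eq, jetComp_add_smul, hΨ, hΦ, smul_zero, add_zero]
  · rw [Set.mem_ofPred_eq, kerDim, mulVecLin_linPart_add_smul, hker, hΦker, hrank]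

/-- For `γ ∈ J_k^{reg}(1,n)`, the subset `S_γ ∩ J_k^o(n,N)` is dense in
`S_γ = {Ψ ∈ J_k(n,N) : Ψ ∘ γ = 0}` (standard topology of the finite-dimensional
vector space `J_k(n,N)`). -/
theorem dense_JO_in_solution_space (k n N : ℕ) (hk : 1 ≤ k) (hn : 1 ≤ n) (hN : n ≤ N)
    (γ : Jet k 1 n) (hγ : linPart γ ≠ 0) :
    {Ψ : Jet k n N | jetComp Ψ γ = 0} ⊆
      closure ({Ψ : Jet k n N | jetComp Ψ γ = 0} ∩ {Ψ : Jet k n N | kerDim Ψ = 1}) := by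
  have hcol : LinearIndependent ℂ (linPart γ).col := linearIndependent_col_of_ne_zero hγ
  exact dense_JO_in_solution_space_general hk (hN.trans N.le_succ) γ hcol

end JetPaper
end
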